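/- Let d > 4 be an integer and let σ² ∈ (0,∞). Define G : ℤ^d → [0,∞) by G(z) = (σ²/2)·(g⋆g)(z) + (1 − σ²/2)·g(z) + (1 − σ²/2)·(1/(2d))·Σ_{e∈ℤ^d, ‖e‖=1} g(z+e). Then there is a constant c_G > 0, depending only on d and σ², such that for every ε > 0 one has G(z) = c_G·‖z‖^{−(d−4)} + o(‖z‖^{−(d−2−ε)}) as ‖z‖ → ∞; that is, ‖z‖^{d−2−ε}·(G(z) − c_G·‖z‖^{−(d−4)}) → 0 as ‖z‖ → ∞. -/

import Mathlib

/-!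
Let `p_t(z)` be the transition probabilities of the walk run by a rate-one Poisson clock. Since
`∫₀^∞ (t^m / m!) e^{-t} t^k / k! dt = (k+m).choose m`, one has exactly `g(z) = ∫₀^∞ p_t(z) dt` and
`(g ⋆ g)(z) = ∑ₖ (k+1) P(X_k = z) = ∫₀^∞ t p_t(z) dt`.

In continuous time the coordinates are independent, so `p_t` is a product of one-dimensional
Fourier integrals, and so is the Gaussian kernel `q_t` of covariance `(t/d) I`. Moving each contour
to height `±1/√(1+t)`, towards `z`, costs only a constant factor and gains `e^{-|z_i|/√(1+t)}`.
Hence the usual proof of the local limit theorem yields at once, for `‖z‖ ≥ 3`,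
`p_t(z) + t |p_t(z) - q_t(z)| ≤ C (1+t)^{-d/2} e^{-‖z‖/√(1+t)}`.

The time integral of the right-hand side is `O(‖z‖^{2-d})`, and that of `t q_t(z)` is exactly a
constant times `‖z‖^{4-d}`. Thus `g(z) = O(‖z‖^{2-d})`, and `g ⋆ g` alone contributes the main term.
-/

open Filter

noncomputable section

/-- `srwP d k x` is the probability that the simple random walk on `ℤ^d`
started at `0` is at `x` at time `k`. -/
def srwP (d : ℕ) : ℕ → (Fin d → ℤ) → ENNReal
  | 0, x => if x = 0 then 1 else 0
  | k + 1, x =>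
      (2 * d : ENNReal)⁻¹ *
        ∑ i : Fin d, (srwP d k (x - Pi.single i 1) + srwP d k (x + Pi.single i 1))

/-- The Euclidean norm on `ℤ^d`. -/
def nrmZ (d : ℕ) (x : Fin d → ℤ) : ℝ := Real.sqrt (∑ i, ((x i : ℝ)) ^ 2)

/-- The Green's function of the simple random walk on `ℤ^d`. -/
def green (d : ℕ) (x : Fin d → ℤ) : ENNReal := ∑' k : ℕ, srwP d k x

/-- Convolution of two `[0,∞]`-valued functions on `ℤ^d`. -/
def convE (d : ℕ) (f h : (Fin d → ℤ) → ENNReal) (z : Fin d → ℤ) : ENNReal :=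
  ∑' x, f x * h (z - x)

/-- The function `G(z) = (σ²/2)(g⋆g)(z) + (1−σ²/2) g(z) + (1−σ²/2)(2d)⁻¹ Σ_{‖e‖=1} g(z+e)`. -/
def Gfun (d : ℕ) (σ2 : ℝ) (z : Fin d → ℤ) : ℝ :=
  σ2 / 2 * (convE d (green d) (green d) z).toReal
    + (1 - σ2 / 2) * (green d z).toReal
    + (1 - σ2 / 2) * (1 / (2 * (d : ℝ))) *
        ∑' e : Fin d → ℤ, (if nrmZ d e = 1 then (green d (z + e)).toReal else 0)

open MeasureTheory

open scoped Real

section Convolution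

variable {d : ℕ} {f h : (Fin d → ℤ) → ENNReal} {z : Fin d → ℤ}

lemma convE_comp_add_right (a : Fin d → ℤ) :
    convE d (fun x ↦ f (x + a)) h z = convE d f h (z + a) := by
  unfold convE
  rw [← (Equiv.addRight a).tsum_eq fun x ↦ f x * h (z + a - x)]
  exact tsum_congr fun x ↦ by simp

lemma convE_tsum {ι κ : Type*} (u : ι → (Fin d → ℤ) → ENNReal) (v : κ → (Fin d → ℤ) → ENNReal) :
    convE d (fun x ↦ ∑' i, u i x) (fun x ↦ ∑' j, v j x) z
      = ∑' i, ∑' j, convE d (u i) (v j) z := by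
  calc convE d (fun x ↦ ∑' i, u i x) (fun x ↦ ∑' j, v j x) z
      = ∑' x, ∑' i, ∑' j, u i x * v j (z - x) := by
        simp only [convE, ENNReal.tsum_mul_left, ENNReal.tsum_mul_right]
    _ = ∑' i, ∑' j, convE d (u i) (v j) z := by
        rw [ENNReal.tsum_comm]
        exact tsum_congr fun i ↦ ENNReal.tsum_comm

lemma tsum_tsum_add_eq (a : ℕ → ENNReal) :
    ∑' j, ∑' k, a (j + k) = ∑' n : ℕ, (n + 1 : ENNReal) * a n := by
  rw [← ENNReal.tsum_prod (f := fun j k ↦ a (j + k)),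
    ← Finset.HasAntidiagonal.sigmaAntidiagonalEquivProd.tsum_eq, ENNReal.tsum_sigma']
  refine tsum_congr fun n ↦ ?_
  have antidiagonal_sum (p : Finset.HasAntidiagonal.antidiagonal n) :
      (p : ℕ × ℕ).1 + (p : ℕ × ℕ).2 = n := Finset.HasAntidiagonal.mem_antidiagonal.1 p.2
  simp [tsum_fintype, antidiagonal_sum]

lemma convE_srwP (j k : ℕ) (z : Fin d → ℤ) :
    convE d (srwP d j) (srwP d k) z = srwP d (j + k) z := by
  induction j generalizing z with
  | zero =>
    rw [zero_add, convE, tsum_eq_single 0 fun x hx ↦ by simp [srwP, hx]]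
    simp [srwP]
  | succ j ih =>
    have convE_neighbours : convE d (srwP d (j + 1)) (srwP d k) z = (2 * d : ENNReal)⁻¹ *
        ∑ i, (convE d (fun x ↦ srwP d j (x + -Pi.single i 1)) (srwP d k) z
          + convE d (fun x ↦ srwP d j (x + Pi.single i 1)) (srwP d k) z) := by
      simp only [convE, srwP, sub_eq_add_neg, mul_assoc, Finset.sum_mul, add_mul,
        ENNReal.tsum_mul_left, ENNReal.tsum_add,
        Summable.tsum_finsetSum fun _ _ ↦ ENNReal.summable]
    rw [convE_neighbours, add_right_comm, srwP]
    simp only [convE_comp_add_right, ih, sub_eq_add_neg]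

lemma convE_green (z : Fin d → ℤ) :
    convE d (green d) (green d) z = ∑' n : ℕ, (n + 1 : ENNReal) * srwP d n z := by
  calc convE d (green d) (green d) z
      = ∑' j, ∑' k, convE d (srwP d j) (srwP d k) z := convE_tsum _ _
    _ = ∑' n : ℕ, (n + 1 : ENNReal) * srwP d n z := by
        simp only [convE_srwP, tsum_tsum_add_eq fun n ↦ srwP d n z]

end Convolution

lemma srwP_le_one (d k : ℕ) (x : Fin d → ℤ) : srwP d k x ≤ 1 := by
  induction k generalizing x with
  | zero => rw [srwP]; split_ifs <;> simp
  | succ k ih =>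
    calc srwP d (k + 1) x ≤ (2 * d : ENNReal)⁻¹ * ∑ _i : Fin d, (1 + 1) := by
          rw [srwP]; gcongr <;> exact ih _
      _ ≤ 1 := by simp [mul_comm, one_add_one_eq_two]

/-- Real-valued version of the transition probability `srwP d k z`. -/
def walkProb {d : ℕ} (k : ℕ) (z : Fin d → ℤ) : ℝ := (srwP d k z).toReal

section WalkProb

variable {d : ℕ} (k : ℕ) (z : Fin d → ℤ)

lemma walkProb_nonneg : 0 ≤ walkProb k z := ENNReal.toReal_nonneg

lemma srwP_ne_top : srwP d k z ≠ ⊤ := ne_top_of_le_ne_top ENNReal.one_ne_top (srwP_le_one d k z)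

lemma walkProb_le_one : walkProb k z ≤ 1 :=
  ENNReal.toReal_le_of_le_ofReal zero_le_one (by simpa using srwP_le_one d k z)

lemma ofReal_walkProb : ENNReal.ofReal (walkProb k z) = srwP d k z :=
  ENNReal.ofReal_toReal (srwP_ne_top k z)

lemma walkProb_zero : walkProb 0 z = if z = 0 then 1 else 0 := by
  simp only [walkProb, srwP, apply_ite ENNReal.toReal, ENNReal.toReal_one, ENNReal.toReal_zero]

lemma walkProb_succ : walkProb (k + 1) z
    = (2 * d : ℝ)⁻¹ * ∑ i, (walkProb k (z - Pi.single i 1) + walkProb k (z + Pi.single i 1)) := by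
  have toReal_step (i : Fin d) :
      (srwP d k (z - Pi.single i 1) + srwP d k (z + Pi.single i 1)).toReal
        = walkProb k (z - Pi.single i 1) + walkProb k (z + Pi.single i 1) :=
    ENNReal.toReal_add (srwP_ne_top k _) (srwP_ne_top k _)
  rw [walkProb, srwP, ENNReal.toReal_mul, ENNReal.toReal_sum fun i _ ↦
    ENNReal.add_ne_top.2 ⟨srwP_ne_top k _, srwP_ne_top k _⟩]
  simp [toReal_step]

end WalkProb

/-! ### The continuous-time walk -/

/-- The Poisson probability `e^{-t} t^k / k!` that a rate-one clock rings `k` times before `t`. -/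
def poissonWeight (t : ℝ) (k : ℕ) : ℝ := Real.exp (-t) * (t ^ k / k.factorial)

/-- The transition probability from `0` to `z` in time `t` of the rate-one continuous-time simple
random walk. -/
def heatKernel {d : ℕ} (z : Fin d → ℤ) (t : ℝ) : ℝ := ∑' k, poissonWeight t k * walkProb k z

lemma hasSum_poissonWeight_mul_pow (t : ℝ) (w : ℂ) :
    HasSum (fun k ↦ (poissonWeight t k : ℂ) * w ^ k) (Complex.exp (t * (w - 1))) := by
  have term_eq (k : ℕ) : (poissonWeight t k : ℂ) * w ^ k
      = Complex.exp (-t) * ((t * w) ^ k / k.factorial) := by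
    rw [poissonWeight, mul_pow]
    push_cast
    ring
  have exp_series := (NormedSpace.expSeries_div_hasSum_exp (t * w : ℂ)).mul_left (Complex.exp (-t))
  rw [← Complex.exp_eq_exp_ℂ, ← Complex.exp_add, neg_add_eq_sub, ← mul_sub_one] at exp_series
  simpa only [term_eq] using exp_series

section HeatKernel

variable {d : ℕ} (z : Fin d → ℤ) {t : ℝ}

lemma poissonWeight_nonneg (ht : 0 ≤ t) (k : ℕ) : 0 ≤ poissonWeight t k := by
  unfold poissonWeight; positivity

lemma summable_poissonWeight_mul_pow (t a : ℝ) : Summable fun k ↦ poissonWeight t k * a ^ k := by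
  exact_mod_cast (hasSum_poissonWeight_mul_pow t a).summable

lemma poissonWeight_mul_walkProb_nonneg (ht : 0 ≤ t) (k : ℕ) :
    0 ≤ poissonWeight t k * walkProb k z :=
  mul_nonneg (poissonWeight_nonneg ht k) (walkProb_nonneg k z)

lemma summable_poissonWeight_mul_walkProb (ht : 0 ≤ t) :
    Summable fun k ↦ poissonWeight t k * walkProb k z := by
  refine (summable_poissonWeight_mul_pow t 1).of_nonneg_of_le
    (poissonWeight_mul_walkProb_nonneg z ht) fun k ↦ ?_
  rw [one_pow]
  exact mul_le_mul_of_nonneg_left (walkProb_le_one k z) (poissonWeight_nonneg ht k)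

lemma heatKernel_nonneg (ht : 0 ≤ t) : 0 ≤ heatKernel z t :=
  tsum_nonneg (poissonWeight_mul_walkProb_nonneg z ht)

lemma ofReal_heatKernel (ht : 0 ≤ t) :
    ENNReal.ofReal (heatKernel z t)
      = ∑' k, ENNReal.ofReal (poissonWeight t k) * srwP d k z := by
  rw [heatKernel, ENNReal.ofReal_tsum_of_nonneg (poissonWeight_mul_walkProb_nonneg z ht)
    (summable_poissonWeight_mul_walkProb z ht)]
  simp only [ENNReal.ofReal_mul (poissonWeight_nonneg ht _), ofReal_walkProb]

lemma measurable_poissonWeight (k : ℕ) : Measurable fun t ↦ poissonWeight t k := by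
  unfold poissonWeight; fun_prop

lemma aemeasurable_heatKernel : AEMeasurable (heatKernel z) (volume.restrict (Set.Ioi 0)) := by
  have measurable_series : Measurable fun t ↦
      (∑' k, ENNReal.ofReal (poissonWeight t k) * srwP d k z).toReal :=
    (Measurable.tsum fun k ↦ (measurable_poissonWeight k).ennreal_ofReal.mul_const _).ennreal_toReal
  refine measurable_series.aemeasurable.congr ?_
  filter_upwards [ae_restrict_mem measurableSet_Ioi] with t ht
  rw [← ofReal_heatKernel z (le_of_lt ht),
    ENNReal.toReal_ofReal (heatKernel_nonneg z (le_of_lt ht))]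

lemma lintegral_pow_mul_poissonWeight (k m : ℕ) :
    ∫⁻ t in Set.Ioi (0 : ℝ), ENNReal.ofReal (t ^ m * poissonWeight t k)
      = ((k + 1).ascFactorial m : ENNReal) := by
  have gamma_pos : (0 : ℝ) < (k + m : ℕ) + 1 := by positivity
  have gamma_integrand (t : ℝ) : t ^ m * poissonWeight t k
      = (k.factorial : ℝ)⁻¹ * (Real.exp (-t) * t ^ (((k + m : ℕ) : ℝ) + 1 - 1)) := by
    rw [add_sub_cancel_right, Real.rpow_natCast, poissonWeight, pow_add]
    ring
  simp only [gamma_integrand]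
  rw [← ofReal_integral_eq_lintegral_ofReal, integral_const_mul, ← Real.Gamma_eq_integral gamma_pos,
    Real.Gamma_nat_eq_factorial, ← Nat.factorial_mul_ascFactorial, Nat.cast_mul,
    inv_mul_cancel_left₀ (by positivity), ENNReal.ofReal_natCast]
  · exact (Real.GammaIntegral_convergent gamma_pos).const_mul _
  · filter_upwards [ae_restrict_mem measurableSet_Ioi] with t (ht : 0 < t)
    positivity

lemma lintegral_pow_mul_heatKernel (m : ℕ) :
    ∫⁻ t in Set.Ioi (0 : ℝ), ENNReal.ofReal (t ^ m * heatKernel z t)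
      = ∑' k : ℕ, ((k + 1).ascFactorial m : ENNReal) * srwP d k z := by
  calc ∫⁻ t in Set.Ioi (0 : ℝ), ENNReal.ofReal (t ^ m * heatKernel z t)
      = ∫⁻ t in Set.Ioi (0 : ℝ), ∑' k, ENNReal.ofReal (t ^ m * poissonWeight t k) * srwP d k z := by
        refine setLIntegral_congr_fun measurableSet_Ioi fun t (ht : 0 < t) ↦ ?_
        simp only [ENNReal.ofReal_mul (pow_nonneg ht.le m), ofReal_heatKernel z ht.le,
          ← ENNReal.tsum_mul_left, mul_assoc]
    _ = ∑' k : ℕ, ((k + 1).ascFactorial m : ENNReal) * srwP d k z := by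
        have measurable_weight (k : ℕ) :
            Measurable fun t ↦ ENNReal.ofReal (t ^ m * poissonWeight t k) :=
          ((measurable_id.pow_const m).mul (measurable_poissonWeight k)).ennreal_ofReal
        rw [lintegral_tsum fun k ↦ ((measurable_weight k).mul_const _).aemeasurable]
        simp only [lintegral_mul_const _ (measurable_weight _), lintegral_pow_mul_poissonWeight]

lemma lintegral_heatKernel :
    ∫⁻ t in Set.Ioi (0 : ℝ), ENNReal.ofReal (heatKernel z t) = green d z := by
  simpa [green] using lintegral_pow_mul_heatKernel z 0

lemma lintegral_mul_heatKernel :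
    ∫⁻ t in Set.Ioi (0 : ℝ), ENNReal.ofReal (t * heatKernel z t)
      = convE d (green d) (green d) z := by
  simpa [convE_green, Nat.ascFactorial] using lintegral_pow_mul_heatKernel z 1

end HeatKernel

/-! ### Fourier inversion on a shifted contour -/

/-- Lebesgue measure on the period `[-π, π]`, the range of the real part of a frequency. -/
def periodMeasure : Measure ℝ := volume.restrict (Set.Icc (-π) π)

/-- The inverse Fourier transform `(2π)⁻¹ ∫ f(ζ) e^{inζ} dζ` along the line `Im ζ = l`. -/
def lineFourierInv (l : ℝ) (f : ℂ → ℂ) (n : ℤ) : ℂ :=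
  (2 * π)⁻¹ * ∫ x : ℝ, f (x + l * Complex.I) * Complex.exp (Complex.I * n * (x + l * Complex.I))

/-- The Fourier transform of the one-dimensional continuous-time walk at time `s`, cut off to one
period so that inversion is an integral over the whole line. -/
def walkSymbol (s : ℝ) (ζ : ℂ) : ℂ :=
  {ζ : ℂ | |ζ.re| ≤ π}.indicator (fun ζ ↦ Complex.exp (-(s * (1 - Complex.cos ζ)))) ζ

/-- The Fourier transform of the centred Gaussian law of variance `s`. -/
def gaussSymbol (s : ℝ) (ζ : ℂ) : ℂ := Complex.exp (-(s / 2 * ζ ^ 2))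

/-- The plane wave `ζ ↦ e^{i z·ζ}`, at complex frequencies. -/
def planeWave {d : ℕ} (z : Fin d → ℤ) (ζ : Fin d → ℂ) : ℂ :=
  ∏ i, Complex.exp (Complex.I * z i * ζ i)

/-- The Fourier transform of one step of the simple random walk, at complex frequencies. -/
def stepSymbol {d : ℕ} (ζ : Fin d → ℂ) : ℂ := (d : ℂ)⁻¹ * ∑ i, Complex.cos (ζ i)

/-- The frequency with real part `θ` and imaginary part `l`. -/
def shiftedFrequency {d : ℕ} (l θ : Fin d → ℝ) : Fin d → ℂ := fun i ↦ θ i + l i * Complex.I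

instance : IsFiniteMeasure periodMeasure := by unfold periodMeasure; infer_instance

lemma integral_exp_int_mul (l : ℝ) (n : ℤ) :
    ∫ x, Complex.exp (Complex.I * n * (x + l * Complex.I)) ∂periodMeasure
      = if n = 0 then (2 * π : ℂ) else 0 := by
  rw [periodMeasure, integral_Icc_eq_integral_Ioc,
    ← intervalIntegral.integral_of_le (by linarith [Real.pi_pos])]
  split_ifs with h
  · subst h; simp; ring
  · have endpoints_eq : Complex.exp (Complex.I * n * (π : ℂ))
        = Complex.exp (Complex.I * n * ((-π : ℝ) : ℂ)) := by
      rw [Complex.exp_eq_exp_iff_exists_int]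
      exact ⟨n, by push_cast; ring⟩
    simp only [mul_add, Complex.exp_add, intervalIntegral.integral_mul_const]
    rw [integral_exp_mul_complex (by simp [h]), endpoints_eq, sub_self, zero_div, zero_mul]

section Fourier

variable {d : ℕ} (l : Fin d → ℝ) (z : Fin d → ℤ)

lemma planeWave_add_single (j : Fin d) (a : ℤ) (ζ : Fin d → ℂ) :
    planeWave (z + Pi.single j a) ζ = planeWave z ζ * Complex.exp (Complex.I * a * ζ j) := by
  have planeWave_single : planeWave (Pi.single j a) ζ = Complex.exp (Complex.I * a * ζ j) := by
    rw [planeWave, Fintype.prod_eq_single j fun i hi ↦ by simp [Pi.single_eq_of_ne hi],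
      Pi.single_eq_same]
  rw [← planeWave_single]
  simp only [planeWave, ← Finset.prod_mul_distrib, ← Complex.exp_add, Pi.add_apply, Int.cast_add,
    mul_add, add_mul]

lemma stepSymbol_mul_planeWave (ζ : Fin d → ℂ) :
    stepSymbol ζ * planeWave z ζ = (2 * d : ℂ)⁻¹ *
      ∑ i, (planeWave (z - Pi.single i 1) ζ + planeWave (z + Pi.single i 1) ζ) := by
  have neighbours_eq (i : Fin d) : planeWave (z - Pi.single i 1) ζ + planeWave (z + Pi.single i 1) ζ
      = 2 * (Complex.cos (ζ i) * planeWave z ζ) := by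
    rw [sub_eq_add_neg, ← Pi.single_neg, planeWave_add_single, planeWave_add_single, Complex.cos]
    push_cast
    ring_nf
  simp only [neighbours_eq, stepSymbol, ← Finset.mul_sum, ← Finset.sum_mul, mul_inv]
  ring

lemma norm_planeWave_shiftedFrequency (θ : Fin d → ℝ) :
    ‖planeWave z (shiftedFrequency l θ)‖ = ∏ i, Real.exp (-(l i * z i)) := by
  simp [planeWave, shiftedFrequency, norm_prod, Complex.norm_exp, mul_comm]

lemma norm_cos_add_mul_I_le (x y : ℝ) : ‖Complex.cos (x + y * Complex.I)‖ ≤ Real.cosh y := by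
  rw [Complex.cos, Real.cosh_eq, norm_div, Complex.norm_ofNat]
  gcongr
  refine (norm_add_le _ _).trans_eq ?_
  simp [Complex.norm_exp, add_comm]

lemma norm_stepSymbol_shiftedFrequency_le (θ : Fin d → ℝ) :
    ‖stepSymbol (shiftedFrequency l θ)‖ ≤ (d : ℝ)⁻¹ * ∑ i, Real.cosh (l i) := by
  rw [stepSymbol, norm_mul, norm_inv, Complex.norm_natCast]
  gcongr
  exact (norm_sum_le _ _).trans (Finset.sum_le_sum fun i _ ↦ norm_cos_add_mul_I_le _ _)

lemma integrable_stepSymbol_pow_mul_planeWave (k : ℕ) :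
    Integrable (fun θ ↦ stepSymbol (shiftedFrequency l θ) ^ k * planeWave z (shiftedFrequency l θ))
      (Measure.pi fun _ ↦ periodMeasure) := by
  refine Integrable.of_bound (Continuous.aestronglyMeasurable ?_)
    (((d : ℝ)⁻¹ * ∑ i, Real.cosh (l i)) ^ k * ∏ i, Real.exp (-(l i * z i))) (ae_of_all _ fun θ ↦ ?_)
  · unfold stepSymbol planeWave shiftedFrequency; fun_prop
  · rw [norm_mul, norm_pow, norm_planeWave_shiftedFrequency]
    gcongr
    exact norm_stepSymbol_shiftedFrequency_le l θ

lemma integral_stepSymbol_pow_mul_planeWave (k : ℕ) :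
    ∫ θ, stepSymbol (shiftedFrequency l θ) ^ k * planeWave z (shiftedFrequency l θ)
        ∂(Measure.pi fun _ ↦ periodMeasure) = (2 * π : ℂ) ^ d * walkProb k z := by
  induction k generalizing z with
  | zero =>
    simp only [pow_zero, one_mul, planeWave, shiftedFrequency, walkProb_zero]
    rw [integral_fintype_prod_eq_prod (f := fun (i : Fin d) (x : ℝ) ↦
      Complex.exp (Complex.I * z i * (x + l i * Complex.I)))]
    simp only [integral_exp_int_mul]
    split_ifs with h
    · simp [h]
    · obtain ⟨i, hi⟩ := Function.ne_iff.1 h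
      rw [Finset.prod_eq_zero (Finset.mem_univ i) (if_neg hi), Complex.ofReal_zero, mul_zero]
  | succ k ih =>
    have integrand_succ (θ : Fin d → ℝ) :
        stepSymbol (shiftedFrequency l θ) ^ (k + 1) * planeWave z (shiftedFrequency l θ)
          = (2 * d : ℂ)⁻¹ * ∑ i, (stepSymbol (shiftedFrequency l θ) ^ k *
              planeWave (z - Pi.single i 1) (shiftedFrequency l θ)
            + stepSymbol (shiftedFrequency l θ) ^ k *
              planeWave (z + Pi.single i 1) (shiftedFrequency l θ)) := by
      rw [pow_succ, mul_assoc, stepSymbol_mul_planeWave, mul_left_comm, Finset.mul_sum]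
      simp only [mul_add]
    have integrable (w : Fin d → ℤ) := integrable_stepSymbol_pow_mul_planeWave l w k
    simp only [integrand_succ]
    rw [integral_const_mul, integral_finsetSum]
    swap; · exact fun i _ ↦ (integrable _).add (integrable _)
    simp only [integral_add (integrable _) (integrable _), ih, walkProb_succ]
    push_cast
    simp only [← mul_add, ← Finset.mul_sum]
    ring

lemma heatKernel_eq_integral {t : ℝ} (ht : 0 ≤ t) :
    (2 * π : ℂ) ^ d * heatKernel z t
      = ∫ θ, Complex.exp (t * (stepSymbol (shiftedFrequency l θ) - 1)) *
          planeWave z (shiftedFrequency l θ) ∂(Measure.pi fun _ ↦ periodMeasure) := by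
  set μ : Measure (Fin d → ℝ) := Measure.pi fun _ ↦ periodMeasure
  set M : ℝ := (d : ℝ)⁻¹ * ∑ i, Real.cosh (l i)
  set W : ℝ := ∏ i, Real.exp (-(l i * z i))
  set term : ℕ → (Fin d → ℝ) → ℂ := fun k θ ↦ poissonWeight t k *
    (stepSymbol (shiftedFrequency l θ) ^ k * planeWave z (shiftedFrequency l θ)) with term_def
  have norm_term_le (k : ℕ) (θ : Fin d → ℝ) : ‖term k θ‖ ≤ poissonWeight t k * M ^ k * W := by
    rw [term_def, norm_mul, norm_mul, norm_pow, norm_planeWave_shiftedFrequency, Complex.norm_real,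
      Real.norm_of_nonneg (poissonWeight_nonneg ht k), ← mul_assoc]
    have := poissonWeight_nonneg ht k
    gcongr
    exact norm_stepSymbol_shiftedFrequency_le l θ
  have integrable_term (k : ℕ) : Integrable (term k) μ :=
    (integrable_stepSymbol_pow_mul_planeWave l z k).const_mul _
  have summable_integral_norm : Summable fun k ↦ ∫ θ, ‖term k θ‖ ∂μ := by
    refine (((summable_poissonWeight_mul_pow t M).mul_right W).mul_right
      (μ.real Set.univ)).of_nonneg_of_le (fun k ↦ integral_nonneg fun _ ↦ norm_nonneg _) fun k ↦ ?_
    refine (integral_mono (integrable_term k).norm (integrable_const _)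
      (norm_term_le k)).trans_eq ?_
    rw [integral_const, smul_eq_mul, mul_comm]
  have hasSum_term (θ : Fin d → ℝ) : HasSum (fun k ↦ term k θ)
      (Complex.exp (t * (stepSymbol (shiftedFrequency l θ) - 1)) *
        planeWave z (shiftedFrequency l θ)) := by
    simpa only [term_def, mul_assoc] using
      (hasSum_poissonWeight_mul_pow t (stepSymbol (shiftedFrequency l θ))).mul_right
        (planeWave z (shiftedFrequency l θ))
  calc (2 * π : ℂ) ^ d * heatKernel z t = ∑' k, ∫ θ, term k θ ∂μ := by
        rw [heatKernel, Complex.ofReal_tsum, ← tsum_mul_left]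
        refine tsum_congr fun k ↦ ?_
        rw [term_def, integral_const_mul, integral_stepSymbol_pow_mul_planeWave]
        push_cast
        ring
    _ = ∫ θ, ∑' k, term k θ ∂μ :=
        (hasSum_integral_of_summable_integral_norm integrable_term summable_integral_norm).tsum_eq
    _ = _ := by simp only [(hasSum_term _).tsum_eq]

lemma lineFourierInv_walkSymbol (s l : ℝ) (n : ℤ) :
    lineFourierInv l (walkSymbol s) n = (2 * π)⁻¹ *
      ∫ x, Complex.exp (-(s * (1 - Complex.cos (x + l * Complex.I)))) *
        Complex.exp (Complex.I * n * (x + l * Complex.I)) ∂periodMeasure := by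
  rw [lineFourierInv, periodMeasure, ← integral_indicator measurableSet_Icc]
  congr 2 with x
  simp [walkSymbol, Set.indicator_apply, abs_le]

/-- In continuous time the coordinates decouple. -/
lemma heatKernel_eq_prod (hd : 0 < d) {t : ℝ} (ht : 0 ≤ t) :
    (heatKernel z t : ℂ) = ∏ i, lineFourierInv (l i) (walkSymbol (t / d)) (z i) := by
  have exponent_eq (ζ : Fin d → ℂ) :
      t * (stepSymbol ζ - 1) = ∑ i, -((t / d : ℝ) * (1 - Complex.cos (ζ i))) := by
    have : (d : ℂ) ≠ 0 := by exact_mod_cast hd.ne'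
    simp only [stepSymbol, Finset.sum_neg_distrib, ← Finset.mul_sum, Finset.sum_sub_distrib,
      Finset.sum_const, Finset.card_univ, Fintype.card_fin, nsmul_eq_mul]
    push_cast
    field_simp
    ring
  have two_pi_pow_ne_zero : (2 * π : ℂ) ^ d ≠ 0 := by simp [Real.pi_ne_zero]
  refine mul_left_cancel₀ two_pi_pow_ne_zero ?_
  rw [heatKernel_eq_integral l z ht]
  simp only [exponent_eq, Complex.exp_sum, planeWave, ← Finset.prod_mul_distrib, shiftedFrequency]
  rw [integral_fintype_prod_eq_prod (f := fun (i : Fin d) (x : ℝ) ↦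
    Complex.exp (-((t / d : ℝ) * (1 - Complex.cos (x + l i * Complex.I)))) *
      Complex.exp (Complex.I * z i * (x + l i * Complex.I)))]
  simp only [lineFourierInv_walkSymbol, Finset.prod_mul_distrib, Finset.prod_const,
    Finset.card_univ, Fintype.card_fin]
  rw [← mul_assoc, ← mul_pow, Complex.ofReal_inv]
  push_cast
  rw [mul_inv_cancel₀ (by simp [Real.pi_ne_zero]), one_pow, one_mul]

end Fourier

/-- The density at `z` of the centred Gaussian law on `ℝ^d` with the covariance `(t/d) I` of the
random walk at time `t`. -/
def gaussianKernel {d : ℕ} (z : Fin d → ℤ) (t : ℝ) : ℝ :=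
  (√(2 * π * (t / d)))⁻¹ ^ d * Real.exp (-(nrmZ d z ^ 2 / (2 * (t / d))))

lemma lineFourierInv_gaussSymbol {s : ℝ} (hs : 0 < s) (l : ℝ) (n : ℤ) :
    lineFourierInv l (gaussSymbol s) n
      = ((√(2 * π * s))⁻¹ * Real.exp (-((n : ℝ) ^ 2 / (2 * s))) : ℝ) := by
  have hs' : (s : ℂ) ≠ 0 := by exact_mod_cast hs.ne'
  have exponent_eq (x : ℂ) :
      -(s / 2 * (x + l * Complex.I) ^ 2) + Complex.I * n * (x + l * Complex.I)
        = -(s / 2 : ℝ) * x ^ 2 + Complex.I * (n - s * l) * x + (s * l ^ 2 / 2 - n * l) := by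
    push_cast
    linear_combination (-s * l ^ 2 / 2 + n * l : ℂ) * Complex.I_sq
  have completed_square : (s * l ^ 2 / 2 - n * l : ℂ) -
      (Complex.I * (n - s * l)) ^ 2 / (4 * -(s / 2 : ℝ)) = ((-(n ^ 2 / (2 * s)) : ℝ) : ℂ) := by
    push_cast
    rw [mul_pow, Complex.I_sq]
    field_simp
    ring
  have normalization : (2 * π)⁻¹ * √(π / (s / 2)) = (√(2 * π * s))⁻¹ := by
    rw [show π / (s / 2) = (2 * π) ^ 2 / (2 * π * s) by field_simp,
      Real.sqrt_div (by positivity), Real.sqrt_sq (by positivity)]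
    field_simp
  have re_neg : (-(s / 2 : ℝ) : ℂ).re < 0 := by
    rw [Complex.neg_re, Complex.ofReal_re]; linarith
  simp only [lineFourierInv, gaussSymbol, ← Complex.exp_add, exponent_eq]
  rw [integral_cexp_quadratic re_neg, completed_square, neg_neg, ← normalization,
    Real.sqrt_eq_rpow, Complex.ofReal_mul, Complex.ofReal_mul, Complex.ofReal_cpow (by positivity),
    Complex.ofReal_exp, mul_assoc]
  push_cast
  rfl

lemma nrmZ_sq {d : ℕ} (z : Fin d → ℤ) : nrmZ d z ^ 2 = ∑ i, (z i : ℝ) ^ 2 :=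
  Real.sq_sqrt (by positivity)

lemma gaussianKernel_eq_prod {d : ℕ} (hd : 0 < d) (l : Fin d → ℝ) (z : Fin d → ℤ) {t : ℝ}
    (ht : 0 < t) :
    (gaussianKernel z t : ℂ) = ∏ i, lineFourierInv (l i) (gaussSymbol (t / d)) (z i) := by
  have hs : 0 < t / d := by positivity
  simp only [lineFourierInv_gaussSymbol hs, ← Complex.ofReal_prod, Finset.prod_mul_distrib,
    ← Real.exp_sum, Finset.prod_const, Finset.card_univ, Fintype.card_fin,
    Finset.sum_neg_distrib, ← Finset.sum_div, ← nrmZ_sq, gaussianKernel]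

/-! ### The local limit theorem in one dimension -/

section OneDimensional

lemma norm_cexp_sub_cexp_le {a b : ℂ} {c : ℝ} (ha : a.re ≤ c) (hb : b.re ≤ c) :
    ‖Complex.exp a - Complex.exp b‖ ≤ Real.exp c * ‖a - b‖ := by
  refine (convex_halfSpace_re_le c).norm_image_sub_le_of_norm_deriv_le
    (fun w _ ↦ Complex.differentiable_exp w) (fun w (hw : w.re ≤ c) ↦ ?_) hb ha
  rw [Complex.deriv_exp, Complex.norm_exp]
  gcongr

lemma norm_one_sub_cos_sub_sq_le (ζ : ℂ) :
    ‖1 - Complex.cos ζ - ζ ^ 2 / 2‖ ≤ ‖ζ‖ ^ 4 * Real.exp ‖ζ‖ := by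
  set remainder : ℂ → ℂ := fun w ↦
    Complex.exp w - ∑ m ∈ Finset.range 4, w ^ m / m.factorial with remainder_def
  have norm_remainder_le (w : ℂ) (hw : ‖w‖ = ‖ζ‖) : ‖remainder w‖ ≤ ‖ζ‖ ^ 4 * Real.exp ‖ζ‖ :=
    hw ▸ Complex.norm_exp_sub_sum_le_norm_mul_exp w 4
  have eq_mean : 1 - Complex.cos ζ - ζ ^ 2 / 2
      = -((remainder (ζ * Complex.I) + remainder (-ζ * Complex.I)) / 2) := by
    simp only [remainder_def, Complex.cos, Finset.sum_range_succ, Finset.sum_range_zero,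
      Nat.factorial]
    push_cast
    linear_combination (-ζ ^ 2 / 2) * Complex.I_sq
  rw [eq_mean, norm_neg, norm_div, Complex.norm_ofNat, div_le_iff₀ two_pos, mul_two]
  exact (norm_add_le _ _).trans (add_le_add (norm_remainder_le _ (by simp))
    (norm_remainder_le _ (by simp)))

lemma cosh_sub_one_le_sq {l : ℝ} (hl : l ^ 2 ≤ 1) : Real.cosh l - 1 ≤ l ^ 2 := by
  have exp_le := Real.exp_bound_div_one_sub_of_interval (x := l ^ 2 / 2) (by positivity)
    (by linarith)
  have : 1 / (1 - l ^ 2 / 2) ≤ 1 + l ^ 2 := by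
    rw [div_le_iff₀ (by linarith)]
    nlinarith [sq_nonneg l]
  linarith [Real.cosh_le_exp_half_sq l]

variable {s l : ℝ}

lemma re_walk_exponent_le (hs : 0 ≤ s) (hl : l ^ 2 ≤ 1) (hsl : s * l ^ 2 ≤ 1) {x : ℝ}
    (hx : |x| ≤ π) :
    (-(s * (1 - Complex.cos (x + l * Complex.I)))).re ≤ 1 - 2 * (s * (x / π) ^ 2) := by
  have cos_le : Real.cos x ≤ 1 - 2 * (x / π) ^ 2 :=
    (Real.cos_le_one_sub_mul_cos_sq hx).trans_eq (by ring)
  have cos_mul_le : Real.cos x * (Real.cosh l - 1) ≤ l ^ 2 := by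
    nlinarith [Real.cos_le_one x, Real.one_le_cosh l, cosh_sub_one_le_sq hl]
  have re_eq : (-(s * (1 - Complex.cos (x + l * Complex.I)))).re
      = s * Real.cos x + s * (Real.cos x * (Real.cosh l - 1)) - s := by
    rw [Complex.cos_add_mul_I]
    simp [← Complex.ofReal_cos, ← Complex.ofReal_sin, ← Complex.ofReal_cosh, ← Complex.ofReal_sinh]
    ring
  rw [re_eq]
  nlinarith [mul_le_mul_of_nonneg_left cos_le hs, mul_le_mul_of_nonneg_left cos_mul_le hs]

lemma re_gauss_exponent_le (hs : 0 ≤ s) (hsl : s * l ^ 2 ≤ 1) (x : ℝ) :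
    (-(s / 2 * (x + l * Complex.I) ^ 2)).re ≤ 1 - 2 * (s * (x / π) ^ 2) := by
  have re_eq : (-(s / 2 * (x + l * Complex.I) ^ 2)).re = s * l ^ 2 / 2 - s * x ^ 2 / 2 := by
    rw [show (-(s / 2 * (x + l * Complex.I) ^ 2) : ℂ)
        = ((s * l ^ 2 / 2 - s * x ^ 2 / 2 : ℝ) : ℂ) + (-(s * x * l) : ℝ) * Complex.I by
      push_cast
      linear_combination (-s * l ^ 2 / 2 : ℂ) * Complex.I_sq, Complex.add_re, Complex.ofReal_re,
      Complex.re_ofReal_mul, Complex.I_re, mul_zero, add_zero]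
  have : 4 * (x / π) ^ 2 ≤ x ^ 2 :=
    calc 4 * (x / π) ^ 2 ≤ π ^ 2 * (x / π) ^ 2 := by
          gcongr
          nlinarith [Real.two_le_pi]
      _ = x ^ 2 := by field_simp
  rw [re_eq]
  nlinarith

lemma walkSymbol_of_abs_le (s l : ℝ) {x : ℝ} (hx : |x| ≤ π) :
    walkSymbol s (x + l * Complex.I) = Complex.exp (-(s * (1 - Complex.cos (x + l * Complex.I)))) :=
  Set.indicator_of_mem (by simpa using hx) _

lemma walkSymbol_of_lt_abs (s l : ℝ) {x : ℝ} (hx : π < |x|) :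
    walkSymbol s (x + l * Complex.I) = 0 :=
  Set.indicator_of_notMem (by simpa using hx) _

lemma norm_walkSymbol_le (hs : 0 ≤ s) (hl : l ^ 2 ≤ 1) (hsl : s * l ^ 2 ≤ 1) (x : ℝ) :
    ‖walkSymbol s (x + l * Complex.I)‖ ≤ Real.exp 2 * Real.exp (-((1 + s) * (x / π) ^ 2)) := by
  rcases le_or_gt |x| π with hx | hx
  · have : (x / π) ^ 2 ≤ 1 := by
      rw [sq_le_one_iff_abs_le_one, abs_div, abs_of_pos Real.pi_pos]
      exact div_le_one_of_le₀ hx Real.pi_pos.le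
    rw [walkSymbol_of_abs_le s l hx, Complex.norm_exp, ← Real.exp_add]
    gcongr
    nlinarith [re_walk_exponent_le hs hl hsl hx]
  · rw [walkSymbol_of_lt_abs s l hx, norm_zero]
    positivity

lemma norm_gaussSymbol_le (hs : 0 ≤ s) (hsl : s * l ^ 2 ≤ 1) (x : ℝ) :
    ‖gaussSymbol s (x + l * Complex.I)‖ ≤ Real.exp 1 * Real.exp (-(s * (x / π) ^ 2)) := by
  rw [gaussSymbol, Complex.norm_exp, ← Real.exp_add]
  gcongr
  nlinarith [re_gauss_exponent_le hs hsl x, mul_nonneg hs (sq_nonneg (x / π))]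

lemma mul_norm_pow_four_le (hs : 0 ≤ s) (hsl : s * l ^ 2 ≤ 1) (x : ℝ) :
    (s * ‖(x + l * Complex.I : ℂ)‖ ^ 2) ^ 2 ≤ 4 * π ^ 4 * Real.exp (s * (x / π) ^ 2) := by
  set w := s * (x / π) ^ 2 with w_def
  have norm_sq : s * ‖(x + l * Complex.I : ℂ)‖ ^ 2 = π ^ 2 * w + s * l ^ 2 := by
    rw [w_def, Complex.sq_norm, Complex.normSq_add_mul_I]
    field_simp
  have le_exp_half : 1 + w ≤ 2 * Real.exp (w / 2) := by linarith [Real.add_one_le_exp (w / 2)]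
  calc (s * ‖(x + l * Complex.I : ℂ)‖ ^ 2) ^ 2 = (π ^ 2 * w + s * l ^ 2) ^ 2 := by rw [norm_sq]
    _ ≤ (π ^ 2 * (1 + w)) ^ 2 := by
        gcongr
        nlinarith [Real.two_le_pi]
    _ ≤ (π ^ 2 * (2 * Real.exp (w / 2))) ^ 2 := by gcongr
    _ = 4 * π ^ 4 * Real.exp w := by
        rw [mul_pow, mul_pow, ← Real.exp_nat_mul]
        ring_nf

lemma norm_walk_exponent_sub_gauss_exponent_le (hs : 0 < s) (hl : l ^ 2 ≤ 1) (hsl : s * l ^ 2 ≤ 1)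
    {x : ℝ} (hx : |x| ≤ π) :
    ‖-(s * (1 - Complex.cos (x + l * Complex.I))) - -(s / 2 * (x + l * Complex.I) ^ 2)‖
      ≤ 4 * π ^ 4 * Real.exp (s * (x / π) ^ 2) / s * Real.exp (π + 1) := by
  set ζ : ℂ := x + l * Complex.I
  have norm_le : ‖ζ‖ ≤ π + 1 := by
    refine (norm_add_le _ _).trans (add_le_add (by simpa using hx) ?_)
    simpa using abs_le_one_iff_mul_self_le_one.2 (by simpa [sq] using hl)
  have exponent_sub : -(s * (1 - Complex.cos ζ)) - -(s / 2 * ζ ^ 2)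
      = (-s : ℝ) * (1 - Complex.cos ζ - ζ ^ 2 / 2) := by
    push_cast
    ring
  calc ‖-(s * (1 - Complex.cos ζ)) - -(s / 2 * ζ ^ 2)‖
      = s * ‖1 - Complex.cos ζ - ζ ^ 2 / 2‖ := by
        rw [exponent_sub, norm_mul, Complex.norm_real, norm_neg, Real.norm_of_nonneg hs.le]
    _ ≤ s * (‖ζ‖ ^ 4 * Real.exp ‖ζ‖) := by
        gcongr
        exact norm_one_sub_cos_sub_sq_le ζ
    _ = (s * ‖ζ‖ ^ 2) ^ 2 / s * Real.exp ‖ζ‖ := by field_simp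
    _ ≤ 4 * π ^ 4 * Real.exp (s * (x / π) ^ 2) / s * Real.exp (π + 1) := by
        gcongr
        exact mul_norm_pow_four_le hs.le hsl x

lemma norm_walkSymbol_sub_gaussSymbol_le (hs : 0 < s) (hl : l ^ 2 ≤ 1) (hsl : s * l ^ 2 ≤ 1)
    (x : ℝ) :
    ‖walkSymbol s (x + l * Complex.I) - gaussSymbol s (x + l * Complex.I)‖
      ≤ 4 * π ^ 4 * Real.exp (π + 2) / s * Real.exp (-(s * (x / π) ^ 2)) := by
  set w := s * (x / π) ^ 2
  have gauss_exponent_le := re_gauss_exponent_le hs.le hsl x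
  rcases le_or_gt |x| π with hx | hx
  · calc _ = ‖Complex.exp (-(s * (1 - Complex.cos (x + l * Complex.I))))
            - Complex.exp (-(s / 2 * (x + l * Complex.I) ^ 2))‖ := by
          rw [walkSymbol_of_abs_le s l hx, gaussSymbol]
      _ ≤ Real.exp (1 - 2 * w) * (4 * π ^ 4 * Real.exp w / s * Real.exp (π + 1)) := by
          refine (norm_cexp_sub_cexp_le (re_walk_exponent_le hs.le hl hsl hx)
            gauss_exponent_le).trans ?_
          gcongr
          exact norm_walk_exponent_sub_gauss_exponent_le hs hl hsl hx
      _ = 4 * π ^ 4 / s * (Real.exp (1 - 2 * w) * Real.exp w * Real.exp (π + 1)) := by ring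
      _ = 4 * π ^ 4 / s * (Real.exp (π + 2) * Real.exp (-w)) := by
          simp only [← Real.exp_add]
          ring_nf
      _ = 4 * π ^ 4 * Real.exp (π + 2) / s * Real.exp (-w) := by ring
  · have w_ge : s ≤ w := by
      have : 1 ≤ |x / π| := by
        rw [abs_div, abs_of_pos Real.pi_pos, one_le_div Real.pi_pos]
        exact hx.le
      exact le_mul_of_one_le_right hs.le ((one_le_sq_iff_one_le_abs _).2 this)
    have exp_neg_le : Real.exp (-s) ≤ 1 / s := by
      rw [Real.exp_neg, ← one_div]
      exact one_div_le_one_div_of_le hs (by linarith [Real.add_one_le_exp s])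
    rw [walkSymbol_of_lt_abs s l hx, zero_sub, norm_neg, gaussSymbol, Complex.norm_exp]
    calc _ ≤ Real.exp (1 + -s + -w) := by gcongr; linarith
      _ ≤ Real.exp (π + 2) * (1 / s) * Real.exp (-w) := by
          rw [Real.exp_add, Real.exp_add]
          gcongr
          linarith [Real.pi_pos]
      _ = 1 * Real.exp (π + 2) / s * Real.exp (-w) := by ring
      _ ≤ 4 * π ^ 4 * Real.exp (π + 2) / s * Real.exp (-w) := by
          gcongr
          nlinarith [one_le_pow₀ (n := 4) (show 1 ≤ π by linarith [Real.two_le_pi])]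

variable {f : ℂ → ℂ} {c K : ℝ}

lemma measurable_walkSymbol (s : ℝ) : Measurable (walkSymbol s) :=
  Measurable.indicator (by fun_prop)
    (measurableSet_le (Complex.measurable_re.abs) measurable_const)

lemma measurable_gaussSymbol (s : ℝ) : Measurable (gaussSymbol s) := by
  unfold gaussSymbol; fun_prop

lemma norm_lineFourierInv_integrand_le (hf : ∀ x : ℝ, ‖f (x + l * Complex.I)‖
      ≤ K * Real.exp (-(c * (x / π) ^ 2))) (n : ℤ) (x : ℝ) :
    ‖f (x + l * Complex.I) * Complex.exp (Complex.I * n * (x + l * Complex.I))‖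
      ≤ K * Real.exp (-(l * n)) * Real.exp (-(c / π ^ 2) * x ^ 2) := by
  have norm_exp : ‖Complex.exp (Complex.I * n * (x + l * Complex.I))‖ = Real.exp (-(l * n)) := by
    simp [Complex.norm_exp, mul_comm]
  calc _ ≤ K * Real.exp (-(c * (x / π) ^ 2)) * Real.exp (-(l * n)) := by
        rw [norm_mul, norm_exp]
        gcongr
        exact hf x
    _ = _ := by
        rw [show -(c * (x / π) ^ 2) = -(c / π ^ 2) * x ^ 2 by ring]
        ring

lemma integrable_gaussian_majorant (hc : 0 < c) (B : ℝ) :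
    Integrable fun x : ℝ ↦ B * Real.exp (-(c / π ^ 2) * x ^ 2) :=
  (integrable_exp_neg_mul_sq (by positivity)).const_mul _

lemma norm_lineFourierInv_le (hc : 0 < c) (hf : ∀ x : ℝ, ‖f (x + l * Complex.I)‖
      ≤ K * Real.exp (-(c * (x / π) ^ 2))) (n : ℤ) :
    ‖lineFourierInv l f n‖ ≤ K / √c * Real.exp (-(l * n)) := by
  have K_nonneg : 0 ≤ K := by simpa using (norm_nonneg _).trans (hf 0)
  have gaussian_mass : (2 * π)⁻¹ * √(π / (c / π ^ 2)) ≤ (√c)⁻¹ := by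
    rw [show π / (c / π ^ 2) = π ^ 2 * (π / c) by field_simp, Real.sqrt_mul (by positivity),
      Real.sqrt_sq Real.pi_pos.le, Real.sqrt_div Real.pi_pos.le]
    have : √π ≤ 2 := (Real.sqrt_le_left two_pos.le).2 (by linarith [Real.pi_le_four])
    calc (2 * π)⁻¹ * (π * (√π / √c)) = √π / 2 * (√c)⁻¹ := by field_simp
      _ ≤ 1 * (√c)⁻¹ := by gcongr; linarith
      _ = (√c)⁻¹ := one_mul _
  have norm_integral_le := norm_integral_le_of_norm_le (integrable_gaussian_majorant hc _)
    (ae_of_all _ (norm_lineFourierInv_integrand_le hf n))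
  rw [integral_const_mul, integral_gaussian] at norm_integral_le
  rw [lineFourierInv, norm_mul, Complex.norm_real, Real.norm_of_nonneg (by positivity)]
  calc _ ≤ (2 * π)⁻¹ * (K * Real.exp (-(l * n)) * √(π / (c / π ^ 2))) := by gcongr
    _ = K * Real.exp (-(l * n)) * ((2 * π)⁻¹ * √(π / (c / π ^ 2))) := by ring
    _ ≤ K * Real.exp (-(l * n)) * (√c)⁻¹ := by gcongr
    _ = K / √c * Real.exp (-(l * n)) := by ring

lemma integrable_lineFourierInv_integrand (hc : 0 < c) (hmeas : Measurable f)
    (hf : ∀ x : ℝ, ‖f (x + l * Complex.I)‖ ≤ K * Real.exp (-(c * (x / π) ^ 2))) (n : ℤ) :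
    Integrable fun x : ℝ ↦
      f (x + l * Complex.I) * Complex.exp (Complex.I * n * (x + l * Complex.I)) :=
  (integrable_gaussian_majorant hc _).mono' (by fun_prop)
    (ae_of_all _ (norm_lineFourierInv_integrand_le hf n))

lemma norm_lineFourierInv_walkSymbol_le (hs : 0 ≤ s) (hl : l ^ 2 ≤ 1) (hsl : s * l ^ 2 ≤ 1)
    (n : ℤ) :
    ‖lineFourierInv l (walkSymbol s) n‖ ≤ Real.exp 2 / √(1 + s) * Real.exp (-(l * n)) :=
  norm_lineFourierInv_le (by positivity) (norm_walkSymbol_le hs hl hsl) n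

lemma norm_lineFourierInv_gaussSymbol_le (hs : 0 < s) (hsl : s * l ^ 2 ≤ 1) (n : ℤ) :
    ‖lineFourierInv l (gaussSymbol s) n‖ ≤ Real.exp 1 / √s * Real.exp (-(l * n)) :=
  norm_lineFourierInv_le hs (norm_gaussSymbol_le hs.le hsl) n

lemma norm_lineFourierInv_walkSymbol_sub_gaussSymbol_le (hs : 0 < s) (hl : l ^ 2 ≤ 1)
    (hsl : s * l ^ 2 ≤ 1) (n : ℤ) :
    ‖lineFourierInv l (walkSymbol s) n - lineFourierInv l (gaussSymbol s) n‖
      ≤ 4 * π ^ 4 * Real.exp (π + 2) / s / √s * Real.exp (-(l * n)) := by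
  have integrable_walk := integrable_lineFourierInv_integrand (by positivity)
    (measurable_walkSymbol s) (norm_walkSymbol_le hs.le hl hsl) n
  have integrable_gauss := integrable_lineFourierInv_integrand hs
    (measurable_gaussSymbol s) (norm_gaussSymbol_le hs.le hsl) n
  have lineFourierInv_sub : lineFourierInv l (walkSymbol s) n - lineFourierInv l (gaussSymbol s) n
      = lineFourierInv l (walkSymbol s - gaussSymbol s) n := by
    simp only [lineFourierInv, ← mul_sub, ← integral_sub integrable_walk integrable_gauss,
      Pi.sub_apply, sub_mul]
  rw [lineFourierInv_sub]
  exact norm_lineFourierInv_le hs (norm_walkSymbol_sub_gaussSymbol_le hs hl hsl) n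

end OneDimensional

/-! ### Bounds on the heat kernel -/

/-- The diffusive profile that dominates, up to a constant, the heat kernels at distance `R` and
time `t`; the shift `1 + t` makes it meaningful down to `t = 0`. -/
def diffusiveBound (d : ℕ) (R t : ℝ) : ℝ := (√(1 + t))⁻¹ ^ d * Real.exp (-(R / √(1 + t)))

/-- The imaginary part of the frequencies: it points towards `z` and lives on the diffusive scale
`1/√(1+t)`, where shifting the contour costs only a constant factor. -/
def diffusiveTilt {d : ℕ} (z : Fin d → ℤ) (t : ℝ) (i : Fin d) : ℝ := (z i).sign / √(1 + t)

lemma norm_prod_sub_prod_le {ι : Type*} (s : Finset ι) {a b : ι → ℂ} {A : ι → ℝ} {D : ℝ}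
    (ha : ∀ i, ‖a i‖ ≤ A i) (hb : ∀ i, ‖b i‖ ≤ A i) (hab : ∀ i, ‖a i - b i‖ ≤ A i * D) :
    ‖∏ i ∈ s, a i - ∏ i ∈ s, b i‖ ≤ (∏ i ∈ s, A i) * (s.card * D) := by
  have A_nonneg (i : ι) : 0 ≤ A i := (norm_nonneg _).trans (ha i)
  induction s using Finset.cons_induction with
  | empty => simp
  | cons j s hj ih =>
    simp only [Finset.prod_cons, Finset.card_cons, Nat.cast_succ]
    calc ‖a j * ∏ i ∈ s, a i - b j * ∏ i ∈ s, b i‖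
        = ‖a j * (∏ i ∈ s, a i - ∏ i ∈ s, b i) + (a j - b j) * ∏ i ∈ s, b i‖ := by ring_nf
      _ ≤ A j * ((∏ i ∈ s, A i) * (s.card * D)) + A j * D * ∏ i ∈ s, A i := by
          refine (norm_add_le _ _).trans (add_le_add ?_ ?_) <;> rw [norm_mul]
          · exact mul_le_mul (ha j) ih (norm_nonneg _) (A_nonneg j)
          · rw [norm_prod]
            have := (norm_nonneg _).trans (hab j)
            gcongr with i
            exacts [hab j, hb i]
      _ = A j * (∏ i ∈ s, A i) * ((s.card + 1) * D) := by ring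

lemma inv_sqrt_le_mul_inv_sqrt {a b c : ℝ} (ha : 0 < a) (hb : 0 < b) (h : b ≤ c * a) :
    (√a)⁻¹ ≤ √c * (√b)⁻¹ := by
  rw [← div_eq_mul_inv, le_div_iff₀ (Real.sqrt_pos.2 hb), inv_mul_le_iff₀ (Real.sqrt_pos.2 ha),
    mul_comm, ← Real.sqrt_mul' _ ha.le]
  exact Real.sqrt_le_sqrt h

section Dimension

variable {d : ℕ} {z : Fin d → ℤ} {t : ℝ}

lemma diffusiveBound_nonneg (d : ℕ) (R t : ℝ) : 0 ≤ diffusiveBound d R t := by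
  unfold diffusiveBound; positivity

lemma gaussianKernel_nonneg (z : Fin d → ℤ) (t : ℝ) : 0 ≤ gaussianKernel z t := by
  unfold gaussianKernel; positivity

lemma sq_diffusiveTilt_le (z : Fin d → ℤ) (ht : 0 ≤ t) (i : Fin d) :
    diffusiveTilt z t i ^ 2 ≤ (1 + t)⁻¹ := by
  have sign_sq_le : (((z i).sign : ℤ) : ℝ) ^ 2 ≤ 1 := by
    rcases lt_trichotomy (z i) 0 with h | h | h <;>
      simp [h, Int.sign_eq_neg_one_of_neg, Int.sign_eq_one_of_pos]
  rw [diffusiveTilt, div_pow, Real.sq_sqrt (by positivity), ← one_div]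
  gcongr

lemma nrmZ_le_sum_abs (z : Fin d → ℤ) : nrmZ d z ≤ ∑ i, |(z i : ℝ)| := by
  refine Real.sqrt_le_iff.2 ⟨by positivity, ?_⟩
  simpa only [sq_abs] using Finset.sum_sq_le_sq_sum_of_nonneg fun i _ ↦ abs_nonneg (z i : ℝ)

lemma prod_exp_diffusiveTilt_le (z : Fin d → ℤ) (t : ℝ) :
    ∏ i, Real.exp (-(diffusiveTilt z t i * z i)) ≤ Real.exp (-(nrmZ d z / √(1 + t))) := by
  have tilt_mul (i : Fin d) : diffusiveTilt z t i * z i = |(z i : ℝ)| / √(1 + t) := by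
    rw [diffusiveTilt, div_mul_eq_mul_div, ← Int.cast_mul, Int.sign_mul_self_eq_abs, Int.cast_abs]
  simp only [← Real.exp_sum, Finset.sum_neg_distrib, tilt_mul, ← Finset.sum_div]
  gcongr
  exact nrmZ_le_sum_abs z

lemma prod_coordinate_bound_le (κ : ℝ) (hκ : 0 ≤ κ) (z : Fin d → ℤ) (t : ℝ) :
    ∏ i, (κ * (√(1 + t))⁻¹ * Real.exp (-(diffusiveTilt z t i * z i)))
      ≤ κ ^ d * diffusiveBound d (nrmZ d z) t := by
  rw [Finset.prod_mul_distrib, Finset.prod_const, Finset.card_univ, Fintype.card_fin, mul_pow,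
    mul_assoc, diffusiveBound]
  gcongr
  exact prod_exp_diffusiveTilt_le z t

lemma sq_diffusiveTilt_le_one (z : Fin d → ℤ) (ht : 0 ≤ t) (i : Fin d) :
    diffusiveTilt z t i ^ 2 ≤ 1 :=
  (sq_diffusiveTilt_le z ht i).trans (inv_le_one_of_one_le₀ (by linarith))

lemma mul_sq_diffusiveTilt_le_one (hd : 0 < d) (z : Fin d → ℤ) (ht : 0 ≤ t) (i : Fin d) :
    t / d * diffusiveTilt z t i ^ 2 ≤ 1 := by
  have one_le_d : (1 : ℝ) ≤ d := by exact_mod_cast hd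
  calc t / d * diffusiveTilt z t i ^ 2 ≤ t * (1 + t)⁻¹ := by
        gcongr
        exacts [div_le_self ht one_le_d, sq_diffusiveTilt_le z ht i]
    _ ≤ 1 := by
        rw [← div_eq_mul_inv]
        exact div_le_one_of_le₀ (by linarith) (by linarith)

lemma norm_walk_coordinate_le (hd : 0 < d) (z : Fin d → ℤ) (ht : 0 ≤ t) (i : Fin d) :
    ‖lineFourierInv (diffusiveTilt z t i) (walkSymbol (t / d)) (z i)‖
      ≤ Real.exp 2 * √(2 * d) * (√(1 + t))⁻¹ * Real.exp (-(diffusiveTilt z t i * z i)) := by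
  refine (norm_lineFourierInv_walkSymbol_le (by positivity) (sq_diffusiveTilt_le_one z ht i)
    (mul_sq_diffusiveTilt_le_one hd z ht i) _).trans ?_
  rw [div_eq_mul_inv, mul_assoc (Real.exp 2) √(2 * (d : ℝ))]
  gcongr
  refine inv_sqrt_le_mul_inv_sqrt (by positivity) (by positivity) ?_
  have one_le_d : (1 : ℝ) ≤ d := by exact_mod_cast hd
  field_simp
  nlinarith

lemma inv_sqrt_div_le (hd : 0 < d) (ht : 1 ≤ t) :
    (√(t / d))⁻¹ ≤ √(2 * d) * (√(1 + t))⁻¹ := by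
  have : 0 < t := by linarith
  refine inv_sqrt_le_mul_inv_sqrt (by positivity) (by positivity) ?_
  field_simp
  linarith

lemma norm_gauss_coordinate_le (hd : 0 < d) (z : Fin d → ℤ) (ht : 1 ≤ t) (i : Fin d) :
    ‖lineFourierInv (diffusiveTilt z t i) (gaussSymbol (t / d)) (z i)‖
      ≤ Real.exp 2 * √(2 * d) * (√(1 + t))⁻¹ * Real.exp (-(diffusiveTilt z t i * z i)) := by
  refine (norm_lineFourierInv_gaussSymbol_le (by positivity)
    (mul_sq_diffusiveTilt_le_one hd z (by linarith) i) _).trans ?_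
  rw [div_eq_mul_inv, mul_assoc (Real.exp 2) √(2 * (d : ℝ))]
  gcongr
  exacts [one_le_two, inv_sqrt_div_le hd ht]

lemma norm_walk_coordinate_sub_gauss_coordinate_le (hd : 0 < d) (z : Fin d → ℤ) (ht : 1 ≤ t)
    (i : Fin d) :
    ‖lineFourierInv (diffusiveTilt z t i) (walkSymbol (t / d)) (z i)
        - lineFourierInv (diffusiveTilt z t i) (gaussSymbol (t / d)) (z i)‖
      ≤ Real.exp 2 * √(2 * d) * (√(1 + t))⁻¹ * Real.exp (-(diffusiveTilt z t i * z i))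
        * (4 * π ^ 4 * Real.exp π * d / t) := by
  have ht' : 0 ≤ t := by linarith
  calc _ ≤ 4 * π ^ 4 * Real.exp (π + 2) / (t / d) / √(t / d)
          * Real.exp (-(diffusiveTilt z t i * z i)) :=
        norm_lineFourierInv_walkSymbol_sub_gaussSymbol_le (by positivity)
          (sq_diffusiveTilt_le_one z ht' i) (mul_sq_diffusiveTilt_le_one hd z ht' i) _
    _ ≤ 4 * π ^ 4 * Real.exp (π + 2) / (t / d) * (√(2 * d) * (√(1 + t))⁻¹)
          * Real.exp (-(diffusiveTilt z t i * z i)) := by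
        rw [div_eq_mul_inv _ √(t / d)]
        gcongr
        exact inv_sqrt_div_le hd ht
    _ = _ := by
        rw [Real.exp_add, div_div_eq_mul_div]
        ring

lemma heatKernel_le (hd : 0 < d) (z : Fin d → ℤ) (ht : 0 ≤ t) :
    heatKernel z t ≤ (Real.exp 2 * √(2 * d)) ^ d * diffusiveBound d (nrmZ d z) t := by
  calc heatKernel z t ≤ ‖(heatKernel z t : ℂ)‖ := by
        rw [Complex.norm_real]; exact Real.le_norm_self _
    _ ≤ _ := by
        rw [heatKernel_eq_prod (diffusiveTilt z t) z hd ht]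
        exact (Finset.norm_prod_le _ _).trans (Finset.prod_le_prod (fun _ _ ↦ norm_nonneg _)
          fun i _ ↦ norm_walk_coordinate_le hd z ht i)
    _ ≤ _ := prod_coordinate_bound_le _ (by positivity) z t

lemma abs_heatKernel_sub_gaussianKernel_le (hd : 0 < d) (z : Fin d → ℤ) (ht : 1 ≤ t) :
    |heatKernel z t - gaussianKernel z t| ≤ (Real.exp 2 * √(2 * d)) ^ d *
      diffusiveBound d (nrmZ d z) t * (d * (4 * π ^ 4 * Real.exp π * d / t)) := by
  have ht' : 0 < t := by linarith
  rw [← Real.norm_eq_abs, ← Complex.norm_real, Complex.ofReal_sub,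
    heatKernel_eq_prod (diffusiveTilt z t) z hd ht'.le,
    gaussianKernel_eq_prod hd (diffusiveTilt z t) z ht']
  refine (norm_prod_sub_prod_le _ (norm_walk_coordinate_le hd z ht'.le)
    (norm_gauss_coordinate_le hd z ht)
    (norm_walk_coordinate_sub_gauss_coordinate_le hd z ht)).trans ?_
  rw [Finset.card_univ, Fintype.card_fin]
  gcongr
  exact prod_coordinate_bound_le _ (by positivity) z t

lemma gaussianKernel_le_of_le_one (hd : 0 < d) (hz : 3 ≤ nrmZ d z) (ht : 0 < t) (ht1 : t ≤ 1) :
    gaussianKernel z t ≤ √(2 * d) ^ d * diffusiveBound d (nrmZ d z) t := by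
  set R := nrmZ d z
  have one_le_d : (1 : ℝ) ≤ d := by exact_mod_cast hd
  have inv_sqrt_le : (√(2 * π * (t / d)))⁻¹
      ≤ √(2 * d) * Real.exp (1 / t / 2) * (√(1 + t))⁻¹ := by
    rw [Real.exp_half, ← Real.sqrt_mul (by positivity)]
    refine inv_sqrt_le_mul_inv_sqrt (by positivity) (by positivity) ?_
    have one_le_mul_exp : 1 ≤ t * Real.exp (1 / t) := by
      rw [← div_le_iff₀' ht]
      linarith [Real.add_one_le_exp (1 / t)]
    calc 1 + t ≤ 2 * 1 * (2 * π) := by linarith [Real.pi_gt_three]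
      _ ≤ 2 * (t * Real.exp (1 / t)) * (2 * π) := by gcongr
      _ = 2 * d * Real.exp (1 / t) * (2 * π * (t / d)) := by field_simp
  have exponent_le : d * (1 / t / 2) - R ^ 2 / (2 * (t / d)) ≤ -(R / √(1 + t)) := by
    calc d * (1 / t / 2) - R ^ 2 / (2 * (t / d)) = -(d / t * ((R ^ 2 - 1) / 2)) := by
          field_simp; ring
      _ ≤ -(1 * R) := by
          gcongr
          · exact (one_le_div₀ ht).2 (ht1.trans one_le_d)
          · nlinarith
      _ ≤ -(R / √(1 + t)) := by
          rw [one_mul, neg_le_neg_iff]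
          exact div_le_self (by linarith) (Real.one_le_sqrt.2 (by linarith))
  calc gaussianKernel z t ≤ (√(2 * d) * Real.exp (1 / t / 2) * (√(1 + t))⁻¹) ^ d *
          Real.exp (-(R ^ 2 / (2 * (t / d)))) := by
        rw [gaussianKernel]; gcongr
    _ = √(2 * d) ^ d * ((√(1 + t))⁻¹ ^ d *
          Real.exp (d * (1 / t / 2) - R ^ 2 / (2 * (t / d)))) := by
        rw [mul_pow, mul_pow, ← Real.exp_nat_mul, sub_eq_add_neg, Real.exp_add]
        ring
    _ ≤ _ := by
        rw [diffusiveBound]; gcongr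

/-- For `t ≤ 1` the two kernels need not be close, but both are exponentially small in `‖z‖`. -/
lemma exists_mul_abs_heatKernel_sub_gaussianKernel_le (hd : 0 < d) :
    ∃ C : ℝ, 0 ≤ C ∧ ∀ (z : Fin d → ℤ) (t : ℝ), 3 ≤ nrmZ d z → 0 < t →
      t * |heatKernel z t - gaussianKernel z t| ≤ C * diffusiveBound d (nrmZ d z) t := by
  set A := (Real.exp 2 * √(2 * d)) ^ d
  set B : ℝ := √(2 * d) ^ d
  set D : ℝ := d * (4 * π ^ 4 * Real.exp π * d)
  refine ⟨A * D + (A + B), by positivity, fun z t hz ht ↦ ?_⟩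
  have bound_nonneg := diffusiveBound_nonneg d (nrmZ d z) t
  have : 0 ≤ A := by positivity
  have : 0 ≤ D := by positivity
  rcases le_total 1 t with ht1 | ht1
  · calc t * |heatKernel z t - gaussianKernel z t|
        ≤ t * (A * diffusiveBound d (nrmZ d z) t * (d * (4 * π ^ 4 * Real.exp π * d / t))) := by
          gcongr
          exact abs_heatKernel_sub_gaussianKernel_le hd z ht1
      _ = A * D * diffusiveBound d (nrmZ d z) t := by simp only [D]; field_simp
      _ ≤ _ := by gcongr; exact le_add_of_nonneg_right (by positivity)
  · calc t * |heatKernel z t - gaussianKernel z t|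
        ≤ 1 * (|heatKernel z t| + |gaussianKernel z t|) := by
          gcongr
          exact abs_sub _ _
      _ = heatKernel z t + gaussianKernel z t := by
          rw [one_mul, abs_of_nonneg (heatKernel_nonneg z ht.le),
            abs_of_nonneg (gaussianKernel_nonneg z t)]
      _ ≤ A * diffusiveBound d (nrmZ d z) t + B * diffusiveBound d (nrmZ d z) t :=
          add_le_add (heatKernel_le hd z ht.le) (gaussianKernel_le_of_le_one hd hz ht ht1)
      _ ≤ _ := by
          rw [← add_mul]
          exact mul_le_mul_of_nonneg_right (le_add_of_nonneg_left (by positivity)) bound_nonneg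

end Dimension

/-! ### Integration in time -/

section TimeIntegrals

variable {a b c : ℝ}

lemma rpow_neg_mul_exp_neg_eq_comp_inv (a b c : ℝ) {t : ℝ} (ht : t ∈ Set.Ioi 0) :
    t ^ (-a) * Real.exp (-b * t ^ (-c))
      = (|(-1 : ℝ)| * t ^ ((-1 : ℝ) - 1)) •
          ((t ^ (-1 : ℝ)) ^ (a - 2) * Real.exp (-b * (t ^ (-1 : ℝ)) ^ c)) := by
  have ht' : 0 < t := ht
  rw [← Real.rpow_mul ht'.le, ← Real.rpow_mul ht'.le, smul_eq_mul, abs_neg, abs_one, one_mul,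
    ← mul_assoc, ← Real.rpow_add ht']
  ring_nf

lemma integrableOn_rpow_neg_mul_exp_neg_mul_rpow_neg (ha : 1 < a) (hb : 0 < b) (hc : 0 < c) :
    IntegrableOn (fun t ↦ t ^ (-a) * Real.exp (-b * t ^ (-c))) (Set.Ioi 0) := by
  rw [integrableOn_congr_fun (fun t ht ↦ rpow_neg_mul_exp_neg_eq_comp_inv a b c ht)
    measurableSet_Ioi]
  exact (integrableOn_Ioi_comp_rpow_iff (fun x ↦ x ^ (a - 2) * Real.exp (-b * x ^ c))
    (by norm_num)).2 (integrableOn_rpow_mul_exp_neg_mul_rpow (by linarith) hc hb)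

lemma integral_rpow_neg_mul_exp_neg_mul_rpow_neg (ha : 1 < a) (hb : 0 < b) (hc : 0 < c) :
    ∫ t in Set.Ioi 0, t ^ (-a) * Real.exp (-b * t ^ (-c))
      = b ^ (-(a - 1) / c) * (1 / c) * Real.Gamma ((a - 1) / c) := by
  rw [setIntegral_congr_fun measurableSet_Ioi
      (fun t ht ↦ rpow_neg_mul_exp_neg_eq_comp_inv a b c ht),
    integral_comp_rpow_Ioi (fun x ↦ x ^ (a - 2) * Real.exp (-b * x ^ c)) (by norm_num),
    integral_rpow_mul_exp_neg_mul_rpow hc (by linarith) hb, sub_add,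
    show (2 : ℝ) - 1 = 1 by norm_num]

end TimeIntegrals

section Shift

variable {d : ℕ} {R : ℝ}

lemma diffusiveBound_eq_rpow (d : ℕ) (R : ℝ) {t : ℝ} (ht : 0 < 1 + t) :
    diffusiveBound d R t
      = (1 + t) ^ (-(d / 2 : ℝ)) * Real.exp (-R * (1 + t) ^ (-(1 / 2) : ℝ)) := by
  rw [diffusiveBound, Real.sqrt_eq_rpow, ← Real.rpow_neg ht.le, ← Real.rpow_mul_natCast ht.le,
    div_eq_mul_inv R, ← Real.rpow_neg ht.le, neg_mul]
  ring_nf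

lemma measurePreserving_one_add_restrict :
    MeasurePreserving (fun t : ℝ ↦ 1 + t) (volume.restrict (Set.Ioi 0))
      (volume.restrict (Set.Ioi 1)) := by
  simpa using (measurePreserving_add_left volume (1 : ℝ)).restrict_preimage
    (measurableSet_Ioi (a := (1 : ℝ)))

lemma integrableOn_diffusiveBound (hd : 2 < d) (hR : 0 < R) :
    IntegrableOn (diffusiveBound d R) (Set.Ioi 0) := by
  have hd' : (2 : ℝ) < d := by exact_mod_cast hd
  have shifted := measurePreserving_one_add_restrict.integrable_comp_of_integrable
    ((integrableOn_rpow_neg_mul_exp_neg_mul_rpow_neg (a := d / 2) (by linarith) hR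
      one_half_pos).mono_set (Set.Ioi_subset_Ioi zero_le_one))
  exact shifted.congr (ae_restrict_of_forall_mem measurableSet_Ioi fun t ht ↦
    (diffusiveBound_eq_rpow d R (add_pos one_pos ht)).symm)

lemma integral_diffusiveBound_le (hd : 2 < d) (hR : 0 < R) :
    ∫ t in Set.Ioi 0, diffusiveBound d R t ≤ 2 * Real.Gamma (d - 2) * R ^ (2 - (d : ℝ)) := by
  have hd' : (2 : ℝ) < d := by exact_mod_cast hd
  set f : ℝ → ℝ := fun u ↦ u ^ (-(d / 2 : ℝ)) * Real.exp (-R * u ^ (-(1 / 2) : ℝ))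
  have f_integrable : IntegrableOn f (Set.Ioi 0) :=
    integrableOn_rpow_neg_mul_exp_neg_mul_rpow_neg (by linarith) hR one_half_pos
  calc ∫ t in Set.Ioi 0, diffusiveBound d R t = ∫ t in Set.Ioi 0, f (1 + t) :=
        setIntegral_congr_fun measurableSet_Ioi fun t ht ↦
          diffusiveBound_eq_rpow d R (add_pos one_pos ht)
    _ = ∫ u in Set.Ioi 1, f u :=
        measurePreserving_one_add_restrict.integral_comp (measurableEmbedding_addLeft 1) f
    _ ≤ ∫ u in Set.Ioi 0, f u :=
        setIntegral_mono_set f_integrable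
          (ae_restrict_of_forall_mem measurableSet_Ioi fun u (hu : 0 < u) ↦ by positivity)
          (Set.Ioi_subset_Ioi zero_le_one).eventuallyLE
    _ = 2 * Real.Gamma (d - 2) * R ^ (2 - (d : ℝ)) := by
        rw [integral_rpow_neg_mul_exp_neg_mul_rpow_neg (by linarith) hR one_half_pos]
        ring_nf

end Shift

/-- The constant in the asymptotics `(g ⋆ g)(z) ∼ c ‖z‖^{-(d-4)}`. -/
def greenConvConst (d : ℕ) : ℝ := (d / 2) ^ 2 * π ^ (-(d / 2 : ℝ)) * Real.Gamma (d / 2 - 2)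

section Green

variable {d : ℕ} {z : Fin d → ℤ}

lemma greenConvConst_pos (hd : 4 < d) : 0 < greenConvConst d := by
  have hd' : (4 : ℝ) < d := by exact_mod_cast hd
  have := Real.Gamma_pos_of_pos (show (0 : ℝ) < d / 2 - 2 by linarith)
  unfold greenConvConst
  positivity

lemma mul_gaussianKernel_eq_rpow (z : Fin d → ℤ) {t : ℝ} (ht : t ∈ Set.Ioi 0) :
    t * gaussianKernel z t = (d / (2 * π)) ^ (d / 2 : ℝ) *
      (t ^ (-(d / 2 - 1) : ℝ) * Real.exp (-(d / 2 * nrmZ d z ^ 2) * t ^ (-1 : ℝ))) := by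
  have ht' : 0 < t := ht
  have prefactor_eq : (√(2 * π * (t / d)))⁻¹ ^ d
      = (d / (2 * π)) ^ (d / 2 : ℝ) * t ^ (-(d / 2) : ℝ) := by
    rw [← Real.sqrt_inv, Real.sqrt_eq_rpow, ← Real.rpow_mul_natCast (by positivity),
      Real.rpow_neg ht'.le, ← Real.inv_rpow ht'.le,
      ← Real.mul_rpow (by positivity) (by positivity)]
    congr 1 <;> field_simp
  have exponent_eq : nrmZ d z ^ 2 / (2 * (t / d)) = d / 2 * nrmZ d z ^ 2 * t ^ (-1 : ℝ) := by
    rw [Real.rpow_neg_one]; field_simp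
  rw [gaussianKernel, prefactor_eq, exponent_eq, neg_mul, neg_sub, sub_eq_add_neg,
    Real.rpow_add ht', Real.rpow_one]
  ring

lemma integrableOn_mul_gaussianKernel (hd : 4 < d) (hz : 0 < nrmZ d z) :
    IntegrableOn (fun t ↦ t * gaussianKernel z t) (Set.Ioi 0) := by
  have hd' : (4 : ℝ) < d := by exact_mod_cast hd
  rw [integrableOn_congr_fun (fun t ht ↦ mul_gaussianKernel_eq_rpow z ht) measurableSet_Ioi]
  exact (integrableOn_rpow_neg_mul_exp_neg_mul_rpow_neg (by linarith) (by positivity)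
    one_pos).const_mul _

lemma integral_mul_gaussianKernel (hd : 4 < d) (hz : 0 < nrmZ d z) :
    ∫ t in Set.Ioi 0, t * gaussianKernel z t
      = greenConvConst d * nrmZ d z ^ (-((d : ℝ) - 4)) := by
  have hd' : (4 : ℝ) < d := by exact_mod_cast hd
  have sq_rpow : (nrmZ d z ^ 2) ^ (-((d : ℝ) / 2 - 2)) = nrmZ d z ^ (-((d : ℝ) - 4)) := by
    rw [← Real.rpow_natCast_mul hz.le]
    ring_nf
  have half_rpow : (d / 2 : ℝ) ^ (d / 2 : ℝ) * (d / 2) ^ (-((d : ℝ) / 2 - 2)) = (d / 2) ^ 2 := by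
    rw [← Real.rpow_add (by positivity), ← Real.rpow_natCast]
    ring_nf
  rw [setIntegral_congr_fun measurableSet_Ioi fun t ht ↦ mul_gaussianKernel_eq_rpow z ht,
    integral_const_mul,
    integral_rpow_neg_mul_exp_neg_mul_rpow_neg (by linarith) (by positivity) one_pos,
    greenConvConst, ← half_rpow, ← sq_rpow, ← div_div, Real.div_rpow (by positivity) Real.pi_nonneg,
    Real.rpow_neg Real.pi_nonneg, div_one, div_one, sub_sub, show (1 : ℝ) + 1 = 2 by norm_num,
    Real.mul_rpow (by positivity) (by positivity)]
  ring_nf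

lemma green_le (hd : 2 < d) (hz : 0 < nrmZ d z) :
    green d z ≤ ENNReal.ofReal ((Real.exp 2 * √(2 * d)) ^ d *
      (2 * Real.Gamma (d - 2) * nrmZ d z ^ (2 - (d : ℝ)))) := by
  set A := (Real.exp 2 * √(2 * d)) ^ d
  have bound_integrable := (integrableOn_diffusiveBound hd hz).const_mul A
  have bound_nonneg (t : ℝ) : 0 ≤ A * diffusiveBound d (nrmZ d z) t :=
    mul_nonneg (by positivity) (diffusiveBound_nonneg d _ t)
  calc green d z = ∫⁻ t in Set.Ioi 0, ENNReal.ofReal (heatKernel z t) :=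
        (lintegral_heatKernel z).symm
    _ ≤ ∫⁻ t in Set.Ioi 0, ENNReal.ofReal (A * diffusiveBound d (nrmZ d z) t) :=
        setLIntegral_mono' measurableSet_Ioi fun t ht ↦
          ENNReal.ofReal_le_ofReal (heatKernel_le (by lia) z (le_of_lt ht))
    _ = ENNReal.ofReal (A * ∫ t in Set.Ioi 0, diffusiveBound d (nrmZ d z) t) := by
        rw [← integral_const_mul, ofReal_integral_eq_lintegral_ofReal bound_integrable
          (ae_of_all _ bound_nonneg)]
    _ ≤ _ := by
        gcongr
        exact integral_diffusiveBound_le hd hz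

lemma toReal_convE_green_green (z : Fin d → ℤ) :
    (convE d (green d) (green d) z).toReal = ∫ t in Set.Ioi 0, t * heatKernel z t := by
  have mul_nonneg_ae : ∀ᵐ t ∂volume.restrict (Set.Ioi 0), 0 ≤ t * heatKernel z t :=
    ae_restrict_of_forall_mem measurableSet_Ioi fun t ht ↦
      mul_nonneg (le_of_lt ht) (heatKernel_nonneg z (le_of_lt ht))
  rw [← lintegral_mul_heatKernel, integral_eq_lintegral_of_nonneg_ae mul_nonneg_ae
    (aemeasurable_id.mul (aemeasurable_heatKernel z)).aestronglyMeasurable]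

lemma exists_abs_convE_green_green_sub_le (hd : 4 < d) :
    ∃ C : ℝ, ∀ z : Fin d → ℤ, 3 ≤ nrmZ d z →
      |(convE d (green d) (green d) z).toReal - greenConvConst d * nrmZ d z ^ (-((d : ℝ) - 4))|
        ≤ C * nrmZ d z ^ (2 - (d : ℝ)) := by
  obtain ⟨C, C_nonneg, kernel_diff_le⟩ :=
    exists_mul_abs_heatKernel_sub_gaussianKernel_le (d := d) (by lia)
  refine ⟨C * (2 * Real.Gamma (d - 2)), fun z hz ↦ ?_⟩
  have hz' : 0 < nrmZ d z := by linarith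
  have gauss_integrable := integrableOn_mul_gaussianKernel hd hz'
  have bound_integrable := (integrableOn_diffusiveBound (d := d) (by lia) hz').const_mul C
  have norm_diff_le : ∀ᵐ t ∂volume.restrict (Set.Ioi 0),
      ‖t * heatKernel z t - t * gaussianKernel z t‖ ≤ C * diffusiveBound d (nrmZ d z) t :=
    ae_restrict_of_forall_mem measurableSet_Ioi fun t (ht : 0 < t) ↦ by
      rw [← mul_sub, norm_mul, Real.norm_of_nonneg ht.le]
      exact kernel_diff_le z t hz ht
  have diff_integrable := Integrable.mono' bound_integrable
    ((aemeasurable_id.mul (aemeasurable_heatKernel z)).aestronglyMeasurable.sub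
      gauss_integrable.aestronglyMeasurable) norm_diff_le
  have heat_integrable : IntegrableOn (fun t ↦ t * heatKernel z t) (Set.Ioi 0) := by
    simpa using! diff_integrable.add gauss_integrable
  rw [toReal_convE_green_green, ← integral_mul_gaussianKernel hd hz',
    ← integral_sub heat_integrable gauss_integrable, ← Real.norm_eq_abs, mul_assoc]
  refine (norm_integral_le_of_norm_le bound_integrable norm_diff_le).trans ?_
  rw [integral_const_mul]
  gcongr
  exact integral_diffusiveBound_le (by lia) hz'

end Green

/-! ### Neighbours of the origin -/

lemma exists_eq_single_or_eq_neg_single {d : ℕ} {e : Fin d → ℤ} (he : nrmZ d e = 1) :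
    ∃ i, e = Pi.single i 1 ∨ e = -Pi.single i 1 := by
  have sum_sq_eq : ∑ i, e i ^ 2 = 1 := by
    have := nrmZ_sq e
    rw [he, one_pow] at this
    exact_mod_cast this.symm
  obtain ⟨i, -, hi⟩ : ∃ i ∈ Finset.univ, e i ^ 2 ≠ 0 :=
    Finset.exists_ne_zero_of_sum_ne_zero (sum_sq_eq ▸ one_ne_zero)
  have rest_nonneg : 0 ≤ ∑ j ∈ Finset.univ.erase i, e j ^ 2 :=
    Finset.sum_nonneg fun j _ ↦ sq_nonneg (e j)
  rw [← Finset.add_sum_erase _ _ (Finset.mem_univ i)] at sum_sq_eq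
  have sq_eq_one : e i ^ 2 = 1 := by have := sq_nonneg (e i); lia
  have others_eq_zero (j : Fin d) (hj : j ≠ i) : e j = 0 :=
    pow_eq_zero_iff two_ne_zero |>.1 <| (Finset.sum_eq_zero_iff_of_nonneg fun j _ ↦
      sq_nonneg (e j)).1 (by lia) j (Finset.mem_erase.2 ⟨hj, Finset.mem_univ j⟩)
  refine ⟨i, (sq_eq_one_iff.1 sq_eq_one).imp ?_ ?_⟩
  all_goals
    intro h
    ext j
    by_cases hj : j = i
    · simp [hj, h]
    · simp [hj, others_eq_zero]

lemma tsum_neighbours_le {d : ℕ} (f : (Fin d → ℤ) → ENNReal) :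
    ∑' e : Fin d → ℤ, (if nrmZ d e = 1 then f e else 0)
      ≤ ∑ i, (f (-Pi.single i 1) + f (Pi.single i 1)) := by
  set atPoint : (Fin d → ℤ) → (Fin d → ℤ) → ENNReal := fun a e ↦ if e = a then f a else 0
  calc ∑' e : Fin d → ℤ, (if nrmZ d e = 1 then f e else 0)
      ≤ ∑' e, ∑ i, (atPoint (-Pi.single i 1) e + atPoint (Pi.single i 1) e) := by
        refine ENNReal.tsum_le_tsum fun e ↦ ?_
        split_ifs with he
        · obtain ⟨i, hi⟩ := exists_eq_single_or_eq_neg_single he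
          refine le_trans ?_ (Finset.single_le_sum (fun _ _ ↦ zero_le) (Finset.mem_univ i))
          rcases hi with rfl | rfl <;> simp [atPoint]
        · exact zero_le
    _ = ∑ i, (f (-Pi.single i 1) + f (Pi.single i 1)) := by
        simp only [Summable.tsum_finsetSum fun _ _ ↦ ENNReal.summable, ENNReal.tsum_add, atPoint,
          tsum_ite_eq]

lemma sum_green_neighbours_le {d : ℕ} (hd : 0 < d) (z : Fin d → ℤ) :
    ∑ i, (green d (z - Pi.single i 1) + green d (z + Pi.single i 1)) ≤ 2 * d * green d z := by
  have two_d_ne_zero : (2 * d : ENNReal) ≠ 0 := by simp [hd.ne']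
  have two_d_ne_top : (2 * d : ENNReal) ≠ ⊤ := ENNReal.mul_ne_top (by simp) (by simp)
  have neighbours_eq (k : ℕ) : ∑ i, (srwP d k (z - Pi.single i 1) + srwP d k (z + Pi.single i 1))
      = 2 * d * srwP d (k + 1) z := by
    rw [srwP, ← mul_assoc, ENNReal.mul_inv_cancel two_d_ne_zero two_d_ne_top, one_mul]
  simp only [green, ← ENNReal.tsum_add]
  rw [← Summable.tsum_finsetSum fun _ _ ↦ ENNReal.summable]
  simp only [neighbours_eq, ENNReal.tsum_mul_left]
  exact mul_right_mono
    (ENNReal.tsum_comp_le_tsum_of_injective (add_left_injective 1) fun k ↦ srwP d k z)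

lemma tsum_toReal_green_neighbours_le {d : ℕ} (hd : 0 < d) {z : Fin d → ℤ} (hz : green d z ≠ ⊤) :
    ∑' e : Fin d → ℤ, (if nrmZ d e = 1 then (green d (z + e)).toReal else 0)
      ≤ 2 * d * (green d z).toReal := by
  have neighbours_le : ∑' e : Fin d → ℤ, (if nrmZ d e = 1 then green d (z + e) else 0)
      ≤ 2 * d * green d z := by
    refine (tsum_neighbours_le fun e ↦ green d (z + e)).trans ?_
    simpa only [← sub_eq_add_neg] using sum_green_neighbours_le hd z
  have bound_ne_top : 2 * d * green d z ≠ ⊤ :=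
    ENNReal.mul_ne_top (ENNReal.mul_ne_top (by simp) (by simp)) hz
  calc ∑' e : Fin d → ℤ, (if nrmZ d e = 1 then (green d (z + e)).toReal else 0)
      = ∑' e : Fin d → ℤ, (if nrmZ d e = 1 then green d (z + e) else 0).toReal := by
        simp only [apply_ite ENNReal.toReal, ENNReal.toReal_zero]
    _ = (∑' e : Fin d → ℤ, (if nrmZ d e = 1 then green d (z + e) else 0)).toReal :=
        (ENNReal.tsum_toReal_eq (ENNReal.ne_top_of_tsum_ne_top
          (ne_top_of_le_ne_top bound_ne_top neighbours_le))).symm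
    _ ≤ (2 * d * green d z).toReal := ENNReal.toReal_mono bound_ne_top neighbours_le
    _ = 2 * d * (green d z).toReal := by simp

/-! ### Asymptotics -/

section Asymptotics

variable {d : ℕ}

lemma eventually_le_nrmZ (d : ℕ) (r : ℝ) : ∀ᶠ z in comap (nrmZ d) atTop, r ≤ nrmZ d z :=
  tendsto_comap.eventually_ge_atTop r

lemma isBigO_rpow_nrmZ_of_le {f : (Fin d → ℤ) → ℝ} {a C r : ℝ}
    (hf : ∀ z, r ≤ nrmZ d z → |f z| ≤ C * nrmZ d z ^ a) :
    f =O[comap (nrmZ d) atTop] fun z ↦ nrmZ d z ^ a := by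
  refine .of_bound C ((eventually_le_nrmZ d r).mono fun z hz ↦ ?_)
  have nrmZ_nonneg : 0 ≤ nrmZ d z := Real.sqrt_nonneg _
  rw [Real.norm_eq_abs, Real.norm_of_nonneg (Real.rpow_nonneg nrmZ_nonneg a)]
  exact hf z hz

lemma isBigO_green (hd : 2 < d) :
    (fun z ↦ (green d z).toReal) =O[comap (nrmZ d) atTop] fun z ↦ nrmZ d z ^ (2 - (d : ℝ)) := by
  refine isBigO_rpow_nrmZ_of_le (r := 1)
    (C := (Real.exp 2 * √(2 * d)) ^ d * (2 * Real.Gamma (d - 2))) fun z hz ↦ ?_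
  have Gamma_pos := Real.Gamma_pos_of_pos (sub_pos.2 (Nat.ofNat_lt_cast.2 hd) : 0 < (d : ℝ) - 2)
  have hz' : 0 < nrmZ d z := by linarith
  rw [abs_of_nonneg ENNReal.toReal_nonneg, mul_assoc]
  exact ENNReal.toReal_le_of_le_ofReal (by positivity) (green_le hd hz')

lemma isBigO_tsum_green_neighbours (hd : 2 < d) :
    (fun z ↦ ∑' e : Fin d → ℤ, (if nrmZ d e = 1 then (green d (z + e)).toReal else 0))
      =O[comap (nrmZ d) atTop] fun z ↦ nrmZ d z ^ (2 - (d : ℝ)) := by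
  refine .trans (.of_bound (2 * d) ((eventually_le_nrmZ d 1).mono fun z hz ↦ ?_)) (isBigO_green hd)
  have green_ne_top : green d z ≠ ⊤ :=
    ne_top_of_le_ne_top ENNReal.ofReal_ne_top (green_le hd (by linarith))
  rw [Real.norm_of_nonneg (tsum_nonneg fun e ↦ by positivity),
    Real.norm_of_nonneg ENNReal.toReal_nonneg]
  exact tsum_toReal_green_neighbours_le (by lia) green_ne_top

lemma isBigO_convE_green_green_sub (hd : 4 < d) :
    (fun z ↦ (convE d (green d) (green d) z).toReal
        - greenConvConst d * nrmZ d z ^ (-((d : ℝ) - 4)))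
      =O[comap (nrmZ d) atTop] fun z ↦ nrmZ d z ^ (2 - (d : ℝ)) := by
  obtain ⟨C, error_le⟩ := exists_abs_convE_green_green_sub_le hd
  exact isBigO_rpow_nrmZ_of_le error_le

lemma tendsto_rpow_mul_of_isBigO_rpow {α : Type*} {l : Filter α} {r f : α → ℝ} {a b : ℝ}
    (hr : Tendsto r l atTop) (hf : f =O[l] fun x ↦ r x ^ a) (hab : a + b < 0) :
    Tendsto (fun x ↦ r x ^ b * f x) l (nhds 0) := by
  have decay : Tendsto (fun x ↦ r x ^ (b + a)) l (nhds 0) := by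
    simpa [Function.comp_def] using (tendsto_rpow_neg_atTop (y := -(b + a)) (by linarith)).comp hr
  refine (((Asymptotics.isBigO_refl (fun x ↦ r x ^ b) l).mul hf).congr' .rfl ?_).trans_tendsto decay
  filter_upwards [hr.eventually_gt_atTop 0] with x hx
  rw [Real.rpow_add hx]

theorem greens_function_asymptotics_general (hd : 4 < d) (σ2 : ℝ) :
    (fun z ↦ Gfun d σ2 z - σ2 / 2 * greenConvConst d * nrmZ d z ^ (-((d : ℝ) - 4)))
      =O[comap (nrmZ d) atTop] fun z ↦ nrmZ d z ^ (2 - (d : ℝ)) := by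
  have conv_term := (isBigO_convE_green_green_sub hd).const_mul_left (σ2 / 2)
  have green_term := (isBigO_green (d := d) (by lia)).const_mul_left (1 - σ2 / 2)
  have neighbour_term := (isBigO_tsum_green_neighbours (d := d) (by lia)).const_mul_left
    ((1 - σ2 / 2) * (1 / (2 * (d : ℝ))))
  refine ((conv_term.add green_term).add neighbour_term).congr_left fun z ↦ ?_
  rw [Gfun]
  ring

end Asymptotics

/-- For `d > 4` there is a constant `c_G > 0` (depending only on `d` and `σ²`)
such that for every `ε > 0`, `G(z) = c_G ‖z‖^{-(d-4)} + o(‖z‖^{-(d-2-ε)})` as `‖z‖ → ∞`. -/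
theorem greens_function_asymptotics (d : ℕ) (hd : 4 < d) (σ2 : ℝ) (hσ : 0 < σ2) :
    ∃ cG : ℝ, 0 < cG ∧ ∀ ε : ℝ, 0 < ε →
      Tendsto
        (fun z : Fin d → ℤ =>
          nrmZ d z ^ ((d : ℝ) - 2 - ε) *
            (Gfun d σ2 z - cG * nrmZ d z ^ (-((d : ℝ) - 4))))
        (Filter.comap (nrmZ d) atTop) (nhds 0) := by
  refine ⟨σ2 / 2 * greenConvConst d, mul_pos (half_pos hσ) (greenConvConst_pos hd), fun ε hε ↦ ?_⟩
  exact tendsto_rpow_mul_of_isBigO_rpow tendsto_comap (greens_function_asymptotics_general hd σ2)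
    (by linarith)
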